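/- arXiv:1310.7790 — 2 statements merged into one kernel-verified Lean document; each statement's English description precedes it below -/
import Mathlib

section
/- Let e : ℕ → ℤ be a finitely supported function with e(n) = 0 for all n < 2. If the product ∏_n [n]^{e(n)}, formed in the unit group of RatFunc ℚ, is a constant rational function (i.e., lies in the image of the canonical embedding of ℚ into RatFunc ℚ), then e = 0 and the product equals 1. In particular, the q-integers [n] for n ≥ 2 generate a free abelian subgroup of (RatFunc ℚ)ˣ whose intersection with the nonzero constants is trivial. -/
/-- The q-integer `[n] = (v^n - v^{-n})/(v - v^{-1})` in `RatFunc ℚ`, where `v = RatFunc.X`. -/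
noncomputable def qint (n : ℕ) : RatFunc ℚ :=
  ((RatFunc.X : RatFunc ℚ) ^ (n : ℤ) - (RatFunc.X : RatFunc ℚ) ^ (-(n : ℤ))) /
    ((RatFunc.X : RatFunc ℚ) - (RatFunc.X : RatFunc ℚ)⁻¹)

/-!
Up to a power of `v`, the q-integer `[n]` is `(v^(2n) - 1) / (v^2 - 1)`, so for `d ≥ 2` the prime
`Φ_{2d}` of `ℚ[v]` occurs in `[n]` exactly when `d ∣ n`. If `N` is the largest index with
`e N ≠ 0`, then `[N]` is the only factor of `∏ [n]^{e n}` in which `Φ_{2N}` occurs, and a product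
with this property cannot be constant.
-/

open Polynomial IsDedekindDomain
open scoped WithZero

theorem eq_zero_of_forall_exists_map_prod_zpow_eq_one {ι G Γ₀ F : Type*} [LinearOrder ι]
    [CommGroupWithZero G] [LinearOrderedCommGroupWithZero Γ₀] [FunLike F G Γ₀]
    [MonoidWithZeroHomClass F G Γ₀] {x : ι → G} {e : ι →₀ ℤ}
    (h : ∀ i ∈ e.support, ∃ f : F, f (x i) ≠ 1 ∧ (∀ j ∈ e.support, j < i → f (x j) = 1) ∧
      f (e.prod fun j k ↦ x j ^ k) = 1) :
    e = 0 := by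
  by_contra he
  obtain ⟨i, hi, hmax⟩ := e.support.exists_max_image id (Finsupp.support_nonempty_iff.2 he)
  obtain ⟨f, hfi, hlower, hprod⟩ := h i hi
  have hsingle : f (e.prod fun j k ↦ x j ^ k) = f (x i) ^ e i := by
    rw [map_finsuppProd, Finsupp.prod_eq_single i (fun j hj hji ↦ ?_) (by simp), map_zpow₀]
    have hj := Finsupp.mem_support_iff.2 hj
    rw [map_zpow₀, hlower j hj ((hmax j hj).lt_of_ne hji), one_zpow]
  have hei : e i = 0 := (zpow_eq_one_iff_right₀ zero_le hfi).1 (hsingle ▸ hprod)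
  exact Finsupp.mem_support_iff.1 hi hei

theorem cyclotomic_dvd_X_pow_sub_one_iff {R : Type*} [CommRing R] [IsDomain R] {d n : ℕ}
    [NeZero (d : R)] : cyclotomic d R ∣ X ^ n - 1 ↔ d ∣ n := by
  constructor
  · intro h
    let K := AlgebraicClosure (FractionRing R)
    have : NeZero (d : FractionRing R) :=
      NeZero.nat_of_injective (IsFractionRing.injective R (FractionRing R))
    have : NeZero (d : K) := NeZero.nat_of_injective (algebraMap (FractionRing R) K).injective
    obtain ⟨ζ, hζ⟩ := HasEnoughRootsOfUnity.exists_primitiveRoot K d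
    have hroot : aeval ζ (cyclotomic d R) = 0 := by
      rw [aeval_def, ← eval_map, map_cyclotomic]
      exact isRoot_cyclotomic_iff.2 hζ
    have hpow : aeval ζ (X ^ n - 1 : R[X]) = 0 := aeval_eq_zero_of_dvd_aeval_eq_zero h hroot
    exact hζ.dvd_of_pow_eq_one n (by simpa [sub_eq_zero] using hpow)
  · rintro ⟨k, rfl⟩
    rw [pow_mul]
    exact (cyclotomic.dvd_X_pow_sub_one d R).trans (sub_one_dvd_pow_sub_one _ k)

theorem isCoprime_cyclotomic_X (d : ℕ) (R : Type*) [CommRing R] :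
    IsCoprime (cyclotomic d R) X := by
  obtain rfl | hd := eq_or_ne d 0
  · simpa using isCoprime_one_left
  have h : IsCoprime (X ^ d - 1 : R[X]) X := ⟨-1, X ^ (d - 1), by rw [pow_sub_one_mul hd]; ring⟩
  exact h.of_isCoprime_of_dvd_left (cyclotomic.dvd_X_pow_sub_one d R)

/-- The prime of `ℚ[X]` generated by the cyclotomic polynomial `Φ_d`, as a place of `RatFunc ℚ`. -/
noncomputable def cyclotomicPrime (d : ℕ) [NeZero d] : HeightOneSpectrum ℚ[X] :=
  .ofPrime (p := Ideal.span {cyclotomic d ℚ}) <|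
    Ideal.prime_span_singleton_iff.2 (cyclotomic.irreducible_rat (NeZero.pos d)).prime

/-- The `Φ_d`-adic valuation on `RatFunc ℚ`, which detects the factor `Φ_d`. It is written
multiplicatively: the value is `1` when `Φ_d` does not occur. -/
noncomputable def cyclotomicValuation (d : ℕ) [NeZero d] : Valuation (RatFunc ℚ) ℤᵐ⁰ :=
  (cyclotomicPrime d).valuation (RatFunc ℚ)

section cyclotomicValuation

variable (d : ℕ) [NeZero d]

theorem cyclotomicValuation_algebraMap_eq_one_iff {p : ℚ[X]} :
    cyclotomicValuation d (algebraMap ℚ[X] (RatFunc ℚ) p) = 1 ↔ ¬ cyclotomic d ℚ ∣ p := by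
  rw [cyclotomicValuation, HeightOneSpectrum.valuation_eq_one_iff_notMem, cyclotomicPrime,
    HeightOneSpectrum.ofPrime_asIdeal, Ideal.mem_span_singleton]

theorem cyclotomicValuation_algebraMap_of_isCoprime {p : ℚ[X]} (hp : IsCoprime (cyclotomic d ℚ) p) :
    cyclotomicValuation d (algebraMap ℚ[X] (RatFunc ℚ) p) = 1 :=
  (cyclotomicValuation_algebraMap_eq_one_iff d).2 fun hdvd ↦
    (cyclotomic.irreducible_rat (NeZero.pos d)).not_isUnit (hp.isUnit_of_dvd' dvd_rfl hdvd)

theorem cyclotomicValuation_X : cyclotomicValuation d RatFunc.X = 1 := by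
  rw [← RatFunc.algebraMap_X]
  exact cyclotomicValuation_algebraMap_of_isCoprime d (isCoprime_cyclotomic_X d ℚ)

theorem cyclotomicValuation_const {c : ℚ} (hc : c ≠ 0) :
    cyclotomicValuation d (algebraMap ℚ (RatFunc ℚ) c) = 1 := by
  rw [IsScalarTower.algebraMap_apply ℚ ℚ[X] (RatFunc ℚ)]
  exact cyclotomicValuation_algebraMap_of_isCoprime d
    (isCoprime_one_right.of_isCoprime_of_dvd_right (isUnit_C.2 hc.isUnit).dvd)

theorem cyclotomicValuation_X_pow_sub_one_eq_one_iff {n : ℕ} :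
    cyclotomicValuation d (RatFunc.X ^ n - 1) = 1 ↔ ¬ d ∣ n := by
  rw [← cyclotomic_dvd_X_pow_sub_one_iff (R := ℚ), ← cyclotomicValuation_algebraMap_eq_one_iff]
  simp

end cyclotomicValuation

theorem qint_mul_X_sq_sub_one (n : ℕ) :
    qint n * (RatFunc.X ^ 2 - 1) * RatFunc.X ^ n = RatFunc.X * (RatFunc.X ^ (2 * n) - 1) := by
  have hX : (RatFunc.X : RatFunc ℚ) ≠ 0 := RatFunc.X_ne_zero
  have hX2 : (RatFunc.X : RatFunc ℚ) ^ 2 - 1 ≠ 0 := by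
    simpa using RatFunc.algebraMap_ne_zero (X_pow_sub_C_ne_zero two_pos (1 : ℚ))
  have hden : (RatFunc.X : RatFunc ℚ) - RatFunc.X⁻¹ = (RatFunc.X ^ 2 - 1) / RatFunc.X := by
    field_simp
  rw [qint, hden, zpow_neg, zpow_natCast]
  field_simp
  ring

theorem cyclotomicValuation_qint_eq_one_iff {d n : ℕ} [NeZero d] (hd : d ≠ 1) :
    cyclotomicValuation (2 * d) (qint n) = 1 ↔ ¬ d ∣ n := by
  have hX2 : cyclotomicValuation (2 * d) (RatFunc.X ^ 2 - 1) = 1 := by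
    rw [cyclotomicValuation_X_pow_sub_one_eq_one_iff]
    exact fun h ↦ hd (Nat.dvd_one.1 (Nat.dvd_of_mul_dvd_mul_left two_pos h))
  have hqint := congrArg (cyclotomicValuation (2 * d)) (qint_mul_X_sq_sub_one n)
  rw [map_mul, map_mul, map_mul, map_pow, cyclotomicValuation_X, hX2, one_pow, mul_one, mul_one,
    one_mul] at hqint
  rw [hqint, cyclotomicValuation_X_pow_sub_one_eq_one_iff, Nat.mul_dvd_mul_iff_left two_pos]

theorem qint_ne_zero {n : ℕ} (hn : n ≠ 0) : qint n ≠ 0 := by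
  refine (Valuation.ne_zero_iff (cyclotomicValuation (2 * (n + 1)))).1 ?_
  rw [(cyclotomicValuation_qint_eq_one_iff (by simpa)).2
    (Nat.not_dvd_of_pos_of_lt (Nat.pos_of_ne_zero hn) n.lt_succ_self)]
  exact one_ne_zero

/-- If a product `∏ₙ [n]^{e n}` of q-integers with exponents supported on `n ≥ 2` is a
constant rational function, then all exponents vanish and the product is `1`. -/
theorem qint_prod_eq_const_iff (e : ℕ →₀ ℤ) (he : ∀ n < 2, e n = 0)
    (hc : ∃ c : ℚ, (∏ n ∈ e.support, qint n ^ e n) = algebraMap ℚ (RatFunc ℚ) c) :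
    e = 0 ∧ (∏ n ∈ e.support, qint n ^ e n) = 1 := by
  suffices h : e = 0 by simp [h]
  have two_le : ∀ n ∈ e.support, 2 ≤ n := fun n hn ↦
    not_lt.1 fun hlt ↦ Finsupp.mem_support_iff.1 hn (he n hlt)
  obtain ⟨c, hc⟩ := hc
  have hc0 : c ≠ 0 := by
    rintro rfl
    rw [map_zero] at hc
    refine Finset.prod_ne_zero_iff.2 (fun n hn ↦ ?_) hc
    exact zpow_ne_zero _ (qint_ne_zero (two_pos.trans_le (two_le n hn)).ne')
  refine eq_zero_of_forall_exists_map_prod_zpow_eq_one (x := qint)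
    (F := Valuation (RatFunc ℚ) ℤᵐ⁰) fun N hN ↦ ?_
  have hN2 : 2 ≤ N := two_le N hN
  have : NeZero N := ⟨by lia⟩
  have hqint {n : ℕ} : cyclotomicValuation (2 * N) (qint n) = 1 ↔ ¬ N ∣ n :=
    cyclotomicValuation_qint_eq_one_iff (by lia)
  refine ⟨cyclotomicValuation (2 * N), fun h ↦ hqint.1 h dvd_rfl, fun n hn hlt ↦ ?_, ?_⟩
  · exact hqint.2 (Nat.not_dvd_of_pos_of_lt (two_pos.trans_le (two_le n hn)) hlt)
  · rw [Finsupp.prod, hc, cyclotomicValuation_const _ hc0]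
end

section
/- Uniqueness of the rational/q-rational factorization: if λ and λ′ are positive rational numbers and g and g′ are q-rational numbers such that λ·g = λ′·g′ in RatFunc ℚ (where λ, λ′ are viewed as constant rational functions), then λ = λ′ and g = g′. -/
/-- A q-rational number: a finite product `∏ₙ [n]^{e n}` of q-integers with integer
exponents supported on `n ≥ 2`. -/
def IsQRat (f : RatFunc ℚ) : Prop :=
  ∃ e : ℕ →₀ ℤ, (∀ n < 2, e n = 0) ∧ f = ∏ n ∈ e.support, qint n ^ e n

section LeadingCoeff

variable {K : Type*} [Field K]

/-- The leading coefficient of a rational function, `lc p / lc q` for the fraction `p / q`: the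
multiplicative extension of `Polynomial.leadingCoeff`, bundled as a homomorphism so that it commutes
with products and integer powers. -/
noncomputable def ratFuncLeadingCoeff : RatFunc K →*₀ K :=
  RatFunc.liftMonoidWithZeroHom
    { Polynomial.leadingCoeffHom with map_zero' := Polynomial.leadingCoeff_zero }
    fun _ hp => mem_nonZeroDivisors_of_ne_zero
      (Polynomial.leadingCoeff_ne_zero.mpr (nonZeroDivisors.ne_zero hp))

theorem ratFuncLeadingCoeff_algebraMap_polynomial (p : Polynomial K) :
    ratFuncLeadingCoeff (algebraMap (Polynomial K) (RatFunc K) p) = p.leadingCoeff := by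
  have h : ratFuncLeadingCoeff (algebraMap (Polynomial K) (RatFunc K) p /
      algebraMap (Polynomial K) (RatFunc K) 1) =
        p.leadingCoeff / (1 : Polynomial K).leadingCoeff :=
    RatFunc.liftMonoidWithZeroHom_apply_div _ _ p 1
  simpa using h

theorem ratFuncLeadingCoeff_C (a : K) : ratFuncLeadingCoeff (RatFunc.C a) = a := by
  rw [← RatFunc.algebraMap_C, ratFuncLeadingCoeff_algebraMap_polynomial, Polynomial.leadingCoeff_C]

theorem ratFuncLeadingCoeff_X : ratFuncLeadingCoeff (RatFunc.X : RatFunc K) = 1 := by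
  rw [← RatFunc.algebraMap_X, ratFuncLeadingCoeff_algebraMap_polynomial, Polynomial.leadingCoeff_X]

theorem ratFuncLeadingCoeff_X_pow_sub_one {n : ℕ} (hn : 0 < n) :
    ratFuncLeadingCoeff ((RatFunc.X : RatFunc K) ^ n - 1) = 1 := by
  have hcast : (RatFunc.X : RatFunc K) ^ n - 1 =
      algebraMap (Polynomial K) (RatFunc K) (Polynomial.X ^ n - 1) := by
    rw [map_sub, map_pow, RatFunc.algebraMap_X, map_one]
  rw [hcast, ratFuncLeadingCoeff_algebraMap_polynomial, Polynomial.leadingCoeff_X_pow_sub_one hn]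

theorem ratFuncLeadingCoeff_X_zpow_sub_X_zpow {m k : ℤ} (hkm : k < m) :
    ratFuncLeadingCoeff ((RatFunc.X : RatFunc K) ^ m - RatFunc.X ^ k) = 1 := by
  obtain ⟨d, rfl⟩ := Int.le.dest hkm.le
  have hd : 0 < d := by omega
  have hfactor : (RatFunc.X : RatFunc K) ^ (k + (d : ℤ)) - RatFunc.X ^ k =
      RatFunc.X ^ k * (RatFunc.X ^ d - 1) := by
    rw [zpow_add₀ RatFunc.X_ne_zero, zpow_natCast, mul_sub_one]
  rw [hfactor, map_mul, map_zpow₀, ratFuncLeadingCoeff_X, one_zpow, one_mul,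
    ratFuncLeadingCoeff_X_pow_sub_one hd]

theorem rat_qrat_factorization_unique_general {a b : K} (ha : a ≠ 0) {g g' : RatFunc K}
    (hg : ratFuncLeadingCoeff g = 1) (hg' : ratFuncLeadingCoeff g' = 1)
    (h : RatFunc.C a * g = RatFunc.C b * g') :
    a = b ∧ g = g' := by
  obtain rfl : a = b := by
    simpa [ratFuncLeadingCoeff_C, hg, hg'] using congrArg ratFuncLeadingCoeff h
  exact ⟨rfl, mul_left_cancel₀ ((map_ne_zero _).mpr ha) h⟩

end LeadingCoeff

theorem ratFuncLeadingCoeff_qint {n : ℕ} (hn : n ≠ 0) : ratFuncLeadingCoeff (qint n) = 1 := by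
  have hnum := ratFuncLeadingCoeff_X_zpow_sub_X_zpow (K := ℚ) (m := n) (k := -n) (by omega)
  have hden := ratFuncLeadingCoeff_X_zpow_sub_X_zpow (K := ℚ) (m := 1) (k := -1) (by decide)
  rw [zpow_one, zpow_neg_one] at hden
  rw [qint, map_div₀, hnum, hden, div_one]

theorem IsQRat.ratFuncLeadingCoeff_eq_one {f : RatFunc ℚ} (hf : IsQRat f) :
    ratFuncLeadingCoeff f = 1 := by
  obtain ⟨e, he, rfl⟩ := hf
  rw [map_prod]
  refine Finset.prod_eq_one fun n hn => ?_
  have hn0 : n ≠ 0 := by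
    rintro rfl
    exact Finsupp.mem_support_iff.mp hn (he 0 two_pos)
  rw [map_zpow₀, ratFuncLeadingCoeff_qint hn0, one_zpow]

/-- Uniqueness of the rational/q-rational factorization: if `λ·g = λ'·g'` with `λ, λ'`
positive rationals and `g, g'` q-rational numbers, then `λ = λ'` and `g = g'`. -/
theorem rat_qrat_factorization_unique (lam lam' : ℚ) (hlam : 0 < lam) (hlam' : 0 < lam')
    (g g' : RatFunc ℚ) (hg : IsQRat g) (hg' : IsQRat g')
    (h : algebraMap ℚ (RatFunc ℚ) lam * g = algebraMap ℚ (RatFunc ℚ) lam' * g') :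
    lam = lam' ∧ g = g' := by
  -- This `algebraMap` comes from `DivisionRing.toRatAlgebra`, so `RatFunc.algebraMap_eq_C`, which
  -- is about the algebra structure through polynomials, does not apply.
  have algebraMap_eq_C : algebraMap ℚ (RatFunc ℚ) = RatFunc.C := Subsingleton.elim _ _
  rw [algebraMap_eq_C] at h
  exact rat_qrat_factorization_unique_general hlam.ne' hg.ratFuncLeadingCoeff_eq_one
    hg'.ratFuncLeadingCoeff_eq_one h
end
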